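/- (Corollary 8, dictionary learning.) Suppose Y = θ* + W ∈ ℝ^{n×d} where θ* = Q*Z* for some Q* ∈ ℝ^{n×p*} and Z* ∈ 𝒵̄_{p*,s*}, and W is sub-Gaussian with parameter ρ. Then for any constants λ, ρ > 0 and any sufficiently small constant δ ∈ (0,1), there exists a constant D_{λ,δ,ρ} > 0 depending only on λ, δ, ρ such that for every D > D_{λ,δ,ρ} there exist constants M, C', C'' > 0 depending only on λ, δ, ρ, D with: E Π( np + ds log(ep/s) > (1+δ)(np* + ds* log(ep*/s*)) | Y ) ≤ exp(−C'(np* + ds* log(ep*/s*))) and E Π( ‖θ − θ*‖_F² > M(np* + ds* log(ep*/s*)) | Y ) ≤ exp(−C''(np* + ds* log(ep*/s*))). -/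

import Mathlib

open MeasureTheory Real Matrix
open scoped ENNReal Classical

/-- Euclidean norm of a finitely-indexed real vector. -/
noncomputable def enr {ι : Type*} [Fintype ι] (v : ι → ℝ) : ℝ :=
  Real.sqrt (∑ i, v i ^ 2)

/-- Euclidean inner product. -/
noncomputable def ipr {ι : Type*} [Fintype ι] (u v : ι → ℝ) : ℝ :=
  ∑ i, u i * v i

/-- Sub-Gaussian condition (2.2): `P(|⟨W,K⟩| > t) ≤ exp(-ρ t²/2)` for every unit vector `K`. -/
def subG {ι Ω : Type*} [Fintype ι] [MeasurableSpace Ω] (P : Measure Ω) (ρ : ℝ)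
    (W : Ω → ι → ℝ) : Prop :=
  ∀ K : ι → ℝ, enr K = 1 → ∀ t : ℝ, 0 < t →
    P {ω | t < |ipr (W ω) K|} ≤ ENNReal.ofReal (Real.exp (-ρ * t ^ 2 / 2))

/-- Determinant of the Gram matrix `AᵀA`. -/
noncomputable def gramDet {N κ : Type*} [Fintype N] [Fintype κ] [DecidableEq κ]
    (A : Matrix N κ ℝ) : ℝ := (Aᵀ * A).det

/-- Generic posterior probability for a structured linear model.
`ι` indexes the models (structures), `κ i` the coordinates of the parameter of model `i`,
`A i` is the matrix of the linear operator `𝒳` of model `i`, `w i` the model-selection prior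
weight (with the Gamma-correction already cancelled against the Laplace normalizing constant),
`emb i` maps a parameter to the object the posterior statement is about, `Y` is the data,
`Sel` restricts the model index and `U` the embedded parameter. -/
noncomputable def gpostP {Θ N ι : Type*} [Fintype N] [Fintype ι]
    {κ : ι → Type*} [∀ i, Fintype (κ i)] [∀ i, DecidableEq (κ i)]
    (w : ι → ℝ) (A : (i : ι) → Matrix N (κ i) ℝ)
    (emb : (i : ι) → (κ i → ℝ) → Θ) (lam : ℝ) (Y : N → ℝ)
    (Sel : Set ι) (U : Set Θ) : ℝ :=
  (∑ i : ι, (if i ∈ Sel then w i else 0) * Real.sqrt (gramDet (A i)) *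
      (lam / Real.sqrt π) ^ Fintype.card (κ i) *
      ∫ Q in {Q : κ i → ℝ | emb i Q ∈ U},
        Real.exp (-(1/2) * (enr fun t => Y t - (A i).mulVec Q t) ^ 2
          - lam * enr ((A i).mulVec Q))) /
  (∑ i : ι, w i * Real.sqrt (gramDet (A i)) *
      (lam / Real.sqrt π) ^ Fintype.card (κ i) *
      ∫ Q : κ i → ℝ,
        Real.exp (-(1/2) * (enr fun t => Y t - (A i).mulVec Q t) ^ 2
          - lam * enr ((A i).mulVec Q)))

/-- The values `{-1,0,1}` coded by `Fin 3`. -/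
noncomputable def tern (t : Fin 3) : ℝ := ((t : ℕ) : ℝ) - 1

/-- The coefficient matrix `Z ∈ {-1,0,1}^{p×d}` coded by a `Fin 3`-valued array. -/
noncomputable def dictZmat {p d : ℕ} (z : Fin p → Fin d → Fin 3) :
    Matrix (Fin p) (Fin d) ℝ := fun t j => tern (z t j)

/-- Membership in `𝒵̄_{p,s}`: every column of `Z` has at most `s` nonzero entries and
`det(ZZᵀ) > 0`. -/
def dictOK {p d : ℕ} (s : ℕ) (z : Fin p → Fin d → Fin 3) : Prop :=
  (∀ j : Fin d, (Finset.univ.filter fun t => tern (z t j) ≠ 0).card ≤ s) ∧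
    0 < (dictZmat z * (dictZmat z)ᵀ).det

/-- The design matrix of the dictionary-learning model: it maps the dictionary
`Q ∈ ℝ^{n×p}` to the signal matrix `θ = QZ ∈ ℝ^{n×d}`. -/
noncomputable def dictX {p d : ℕ} (n : ℕ) (z : Fin p → Fin d → Fin 3) :
    Matrix (Fin n × Fin d) (Fin n × Fin p) ℝ :=
  fun a b => if a.1 = b.1 then tern (z b.2 a.2) else 0

/-- The posterior distribution of the dictionary-learning prior: `(p,s)` is sampled with
weight proportional to `(Γ(np)/Γ(np/2)) exp(-3D(np + ds log(ep/s)))` on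
`{(p,s) ∈ [n∧d]×[n] : s ≤ p}`, `Z` uniformly from `𝒵̄_{p,s}`, `Q` from the elliptical
Laplace density `∝ exp(-λ‖QZ‖_F)`, and the Gaussian pseudo-likelihood
`∝ exp(-½‖Y - QZ‖_F²)` is used; `K` restricts `(p,s)` and `U` restricts the signal
matrix `θ = QZ`.  (The Gamma correction factor has been cancelled.) -/
noncomputable def dictPost (n d : ℕ) (D lam : ℝ) (Y : Fin n × Fin d → ℝ)
    (K : Set (ℕ × ℕ)) (U : Set (Fin n × Fin d → ℝ)) : ℝ :=
  gpostP
    (fun i : Σ ps : Fin (n ⊓ d) × Fin n, (Fin ((ps.1 : ℕ) + 1) → Fin d → Fin 3) =>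
      (if ((i.1.2 : ℕ) + 1) ≤ ((i.1.1 : ℕ) + 1) ∧ dictOK ((i.1.2 : ℕ) + 1) i.2
        then 1 else 0) *
        Real.exp (-3 * D * ((n : ℝ) * (((i.1.1 : ℕ) + 1 : ℕ) : ℝ)
          + (d : ℝ) * (((i.1.2 : ℕ) + 1 : ℕ) : ℝ) *
            Real.log (Real.exp 1 * (((i.1.1 : ℕ) + 1 : ℕ) : ℝ)
              / (((i.1.2 : ℕ) + 1 : ℕ) : ℝ)))) *
        ((Finset.univ.filter fun z' : Fin ((i.1.1 : ℕ) + 1) → Fin d → Fin 3 =>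
            dictOK ((i.1.2 : ℕ) + 1) z').card : ℝ)⁻¹)
    (fun i => dictX n i.2)
    (fun i Q => (dictX n i.2).mulVec Q)
    lam Y {i | (((i.1.1 : ℕ) + 1), ((i.1.2 : ℕ) + 1)) ∈ K} U

/-!
Completing the square, the ratio of the posterior density at a signal `v` to that at the truth `θ`
is `exp(⟨W, v - θ⟩ - ‖v - θ‖² / 2 - λ(‖v‖ - ‖θ‖))`. For the signals of one model, `v - θ` ranges
over a space of dimension at most `np + 1`, so a net of size `5 ^ (np + 1)` and the sub-Gaussian
tail bound `⟨W, v - θ⟩` by `‖v - θ‖` times the square root of a multiple of the complexity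
`R = np + ds log(ep/s)`. The number of models of complexity `R` is exponential in `R`, hence a union
bound makes this hold in all models at once, outside an event of exponentially small probability.

On that event the density ratio lies between two Gaussian functions of `‖v - θ‖`. The factor
`√det(AᵀA)` of the prior density cancels the Jacobian of `Q ↦ QZ` in the Gaussian integrals, so the
evidence of every model agrees with that of the true one up to a factor `exp(O(R + R*))`, which
moreover decays like `exp(-M / 8)` when restricted to squared loss at least `M`. A prior factor
`exp(-3DR)` with `D` large dominates these factors and the number of models.
-/

section EuclideanNorm

variable {N : Type*} [Fintype N]

lemma enr_eq_norm_toLp (v : N → ℝ) : enr v = ‖WithLp.toLp 2 v‖ := by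
  simp [enr, EuclideanSpace.norm_eq]

lemma ipr_eq_inner_toLp (u v : N → ℝ) :
    ipr u v = inner ℝ (WithLp.toLp 2 u) (WithLp.toLp 2 v) := by
  simp [ipr, EuclideanSpace.inner_eq_star_dotProduct, dotProduct, mul_comm]

lemma enr_nonneg (v : N → ℝ) : 0 ≤ enr v := Real.sqrt_nonneg _

lemma enr_sq (v : N → ℝ) : enr v ^ 2 = ∑ i, v i ^ 2 :=
  Real.sq_sqrt (Finset.sum_nonneg fun i _ => sq_nonneg (v i))

lemma enr_sub_comm (u v : N → ℝ) : enr (u - v) = enr (v - u) := by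
  simpa only [enr_eq_norm_toLp, WithLp.toLp_sub] using
    norm_sub_rev (WithLp.toLp 2 u) (WithLp.toLp 2 v)

lemma abs_enr_sub_enr_le (u v : N → ℝ) : |enr u - enr v| ≤ enr (u - v) := by
  simpa only [enr_eq_norm_toLp, WithLp.toLp_sub] using
    abs_norm_sub_norm_le (WithLp.toLp 2 u) (WithLp.toLp 2 v)

@[fun_prop]
lemma continuous_enr : Continuous (enr : (N → ℝ) → ℝ) := by
  unfold enr
  fun_prop

lemma enr_add_sub_sq (θ w v : N → ℝ) :
    enr (θ + w - v) ^ 2 = enr w ^ 2 - 2 * ipr w (v - θ) + enr (v - θ) ^ 2 := by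
  simp only [enr_sq, ipr, Finset.mul_sum, ← Finset.sum_sub_distrib, ← Finset.sum_add_distrib,
    Pi.sub_apply, Pi.add_apply]
  exact Finset.sum_congr rfl fun i _ => by ring

end EuclideanNorm

section GaussianIntegrals

variable {N κ : Type*} [Fintype N] [Fintype κ]

lemma integrable_exp_neg_mul_enr_sq {c : ℝ} (hc : 0 < c) :
    Integrable fun x : κ → ℝ => Real.exp (-c * enr x ^ 2) := by
  simp only [enr_sq, Finset.mul_sum, Real.exp_sum]
  exact Integrable.fintype_prod (f := fun _ y => Real.exp (-c * y ^ 2))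
    fun _ => integrable_exp_neg_mul_sq hc

lemma integral_exp_neg_mul_enr_sq (c : ℝ) :
    ∫ x : κ → ℝ, Real.exp (-c * enr x ^ 2) = √(π / c) ^ Fintype.card κ := by
  simp only [enr_sq, Finset.mul_sum, Real.exp_sum]
  rw [integral_fintype_prod_volume_eq_pow fun y : ℝ => Real.exp (-c * y ^ 2), integral_gaussian]

open scoped MatrixOrder in
lemma exists_square_gram_eq (A : Matrix N κ ℝ) : ∃ S : Matrix κ κ ℝ, Aᵀ * A = Sᵀ * S := by
  have h : (Aᵀ * A).PosSemidef := by simpa using Matrix.posSemidef_conjTranspose_mul_self A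
  simpa [Matrix.star_eq_conjTranspose] using CStarAlgebra.nonneg_iff_eq_star_mul_self.mp h.nonneg

lemma enr_mulVec (A : Matrix N κ ℝ) (Q : κ → ℝ) : enr (A *ᵥ Q) = √(Q ⬝ᵥ (Aᵀ * A) *ᵥ Q) := by
  rw [← Matrix.mulVec_mulVec, Matrix.dotProduct_mulVec Q, Matrix.vecMul_transpose]
  simp only [enr, dotProduct, sq]

lemma exists_enr_mulVec_sub_le (A : Matrix N κ ℝ) (θ : N → ℝ) :
    ∃ Q₀, ∀ Q, enr (A *ᵥ (Q - Q₀)) ≤ enr (A *ᵥ Q - θ) := by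
  let T := Matrix.toEuclideanLin A
  obtain ⟨Q₀, hQ₀⟩ := (LinearMap.range T).starProjection_apply_mem (WithLp.toLp 2 θ)
  refine ⟨WithLp.ofLp Q₀, fun Q => ?_⟩
  have hproj : (LinearMap.range T).starProjection (WithLp.toLp 2 (A *ᵥ Q - θ)) =
      WithLp.toLp 2 (A *ᵥ (Q - WithLp.ofLp Q₀)) := by
    have hQ : (LinearMap.range T).starProjection (WithLp.toLp 2 (A *ᵥ Q)) =
        WithLp.toLp 2 (A *ᵥ Q) :=
      Submodule.starProjection_eq_self_iff.mpr ⟨WithLp.toLp 2 Q, rfl⟩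
    rw [WithLp.toLp_sub, map_sub, hQ, ← hQ₀, Matrix.mulVec_sub, WithLp.toLp_sub]
    rfl
  rw [enr_eq_norm_toLp, enr_eq_norm_toLp, ← hproj]
  exact Submodule.norm_starProjection_apply_le _ _

section GramDet

variable [DecidableEq κ]

lemma exists_square_of_gramDet_pos {A : Matrix N κ ℝ} (hA : 0 < gramDet A) :
    ∃ S : Matrix κ κ ℝ, S.det ≠ 0 ∧ √(gramDet A) = |S.det| ∧ ∀ Q, enr (A *ᵥ Q) = enr (S *ᵥ Q) := by
  obtain ⟨S, hS⟩ := exists_square_gram_eq A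
  have hdet : gramDet A = S.det ^ 2 := by
    rw [gramDet, hS, Matrix.det_mul, Matrix.det_transpose, sq]
  refine ⟨S, fun h => by simp [hdet, h] at hA, by rw [hdet, Real.sqrt_sq_eq_abs], fun Q => ?_⟩
  rw [enr_mulVec, enr_mulVec, hS]

lemma measurableEmbedding_toLin' {S : Matrix κ κ ℝ} (hS : S.det ≠ 0) :
    MeasurableEmbedding (Matrix.toLin' S) :=
  (LinearMap.isClosedEmbedding_of_injective <| LinearMap.ker_eq_bot.mpr <|
    Matrix.mulVec_injective_of_isUnit <|
      (Matrix.isUnit_iff_isUnit_det S).mpr hS.isUnit).measurableEmbedding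

lemma integrable_comp_enr_mulVec {A : Matrix N κ ℝ} (hA : 0 < gramDet A) {f : ℝ → ℝ}
    (hf : Integrable fun x : κ → ℝ => f (enr x)) : Integrable fun Q => f (enr (A *ᵥ Q)) := by
  obtain ⟨S, hS, -, hAS⟩ := exists_square_of_gramDet_pos hA
  simp only [hAS]
  refine ((measurableEmbedding_toLin' hS).integrable_map_iff (μ := volume)
    (g := fun x => f (enr x))).mp ?_
  rw [Real.map_matrix_volume_pi_eq_smul_volume_pi hS]
  exact hf.smul_measure ENNReal.ofReal_ne_top

lemma sqrt_gramDet_mul_integral_comp_enr_mulVec {A : Matrix N κ ℝ} (hA : 0 < gramDet A)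
    (f : ℝ → ℝ) : √(gramDet A) * ∫ Q, f (enr (A *ᵥ Q)) = ∫ x : κ → ℝ, f (enr x) := by
  obtain ⟨S, hS, hdet, hAS⟩ := exists_square_of_gramDet_pos hA
  have hmap := (measurableEmbedding_toLin' hS).integral_map (μ := volume) fun x => f (enr x)
  rw [Real.map_matrix_volume_pi_eq_smul_volume_pi hS, integral_smul_measure,
    ENNReal.toReal_ofReal (abs_nonneg _), smul_eq_mul, abs_inv] at hmap
  simp only [Matrix.toLin'_apply] at hmap
  simp only [hAS, hdet, ← hmap, mul_inv_cancel_left₀ (abs_ne_zero.mpr hS)]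

lemma integrable_exp_neg_mul_enr_mulVec_sub_sq {A : Matrix N κ ℝ} (hA : 0 < gramDet A) {c : ℝ}
    (hc : 0 < c) (θ : N → ℝ) : Integrable fun Q => Real.exp (-c * enr (A *ᵥ Q - θ) ^ 2) := by
  obtain ⟨Q₀, hQ₀⟩ := exists_enr_mulVec_sub_le A θ
  have hint : Integrable fun Q => Real.exp (-c * enr (A *ᵥ (Q - Q₀)) ^ 2) :=
    (integrable_comp_enr_mulVec hA (f := fun y => Real.exp (-c * y ^ 2))
      (integrable_exp_neg_mul_enr_sq hc)).comp_sub_right Q₀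
  refine hint.mono' (by fun_prop) (.of_forall fun Q => ?_)
  rw [Real.norm_of_nonneg (Real.exp_nonneg _), neg_mul, neg_mul]
  have := enr_nonneg (A *ᵥ (Q - Q₀))
  gcongr
  exact hQ₀ Q

lemma sqrt_gramDet_mul_integral_exp_neg_mul_enr_mulVec_sub_sq {A : Matrix N κ ℝ}
    (hA : 0 < gramDet A) (c : ℝ) (Q₀ : κ → ℝ) :
    √(gramDet A) * ∫ Q, Real.exp (-c * enr (A *ᵥ Q - A *ᵥ Q₀) ^ 2) =
      √(π / c) ^ Fintype.card κ := by
  simp only [← Matrix.mulVec_sub]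
  rw [integral_sub_right_eq_self (fun Q => Real.exp (-c * enr (A *ᵥ Q) ^ 2)) Q₀,
    sqrt_gramDet_mul_integral_comp_enr_mulVec hA fun y => Real.exp (-c * y ^ 2),
    integral_exp_neg_mul_enr_sq]

lemma sqrt_gramDet_mul_integral_exp_neg_mul_enr_mulVec_sub_sq_le {A : Matrix N κ ℝ}
    (hA : 0 < gramDet A) {c : ℝ} (hc : 0 < c) (θ : N → ℝ) :
    √(gramDet A) * ∫ Q, Real.exp (-c * enr (A *ᵥ Q - θ) ^ 2) ≤ √(π / c) ^ Fintype.card κ := by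
  obtain ⟨Q₀, hQ₀⟩ := exists_enr_mulVec_sub_le A θ
  rw [← sqrt_gramDet_mul_integral_exp_neg_mul_enr_mulVec_sub_sq hA c Q₀]
  refine mul_le_mul_of_nonneg_left (integral_mono
    (integrable_exp_neg_mul_enr_mulVec_sub_sq hA hc θ)
    (integrable_exp_neg_mul_enr_mulVec_sub_sq hA hc _) fun Q => ?_) (Real.sqrt_nonneg _)
  have := enr_nonneg (A *ᵥ Q - A *ᵥ Q₀)
  simp only [neg_mul]
  gcongr
  rw [← Matrix.mulVec_sub]
  exact hQ₀ Q

end GramDet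

end GaussianIntegrals

section Noise

section Net

variable {E : Type*} [NormedAddCommGroup E]

lemma packingNumber_one_closedBall_two_le [NormedSpace ℝ E] [FiniteDimensional ℝ E] :
    Metric.packingNumber 1 (Metric.closedBall (0 : E) 2) ≤ (5 ^ Module.finrank ℝ E : ℕ) := by
  refine iSup₂_le fun C hC => iSup_le fun hsep => ?_
  by_contra! hlt
  obtain ⟨T, hTC, hT⟩ := Set.exists_subset_encard_eq (Order.add_one_le_of_lt hlt)
  have hfin : T.Finite := Set.finite_of_encard_eq_coe (k := 5 ^ Module.finrank ℝ E + 1) (by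
    simpa using hT)
  have hcard := Besicovitch.card_le_of_separated hfin.toFinset
    (fun c hc => by simpa using hC (hTC (hfin.mem_toFinset.mp hc)))
    (fun c hc e he hce => by
      have hlt : _ < edist c e :=
        hsep (hTC (hfin.mem_toFinset.mp hc)) (hTC (hfin.mem_toFinset.mp he)) hce
      rw [edist_nndist, ENNReal.coe_lt_coe] at hlt
      rw [← dist_eq_norm]
      exact_mod_cast hlt.le)
  rw [hfin.encard_eq_coe_toFinset_card] at hT
  norm_cast at hT
  omega

lemma exists_finset_closedBall_two_cover [NormedSpace ℝ E] [FiniteDimensional ℝ E] :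
    ∃ T : Finset E, T.card ≤ 5 ^ Module.finrank ℝ E ∧ (∀ c ∈ T, ‖c‖ ≤ 2) ∧
      ∀ v : E, ‖v‖ ≤ 2 → ∃ c ∈ T, ‖v - c‖ ≤ 1 := by
  have hle := (Metric.coveringNumber_le_packingNumber 1 (Metric.closedBall (0 : E) 2)).trans
    packingNumber_one_closedBall_two_le
  obtain ⟨C, hCball, hfin, hcover, hcard⟩ := Metric.exists_set_encard_eq_coveringNumber
    (hle.trans_lt (ENat.natCast_lt_top _)).ne
  rw [← hcard, hfin.encard_eq_coe_toFinset_card] at hle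
  refine ⟨hfin.toFinset, mod_cast hle, fun c hc => by
    simpa using hCball (hfin.mem_toFinset.mp hc), fun v hv => ?_⟩
  obtain ⟨c, hc, hvc⟩ := hcover (mem_closedBall_zero_iff.mpr hv)
  refine ⟨c, hfin.mem_toFinset.mpr hc, ?_⟩
  rw [← dist_eq_norm]
  exact_mod_cast edist_le_coe.mp hvc

/- If `c` is within `1` of `2x/‖x‖` then `⟪x, c⟫ ≥ 2‖x‖ - ‖x‖ = ‖x‖`. -/
lemma norm_le_of_forall_inner_le [InnerProductSpace ℝ E] {T : Finset E}
    (hT : ∀ c ∈ T, ‖c‖ ≤ 2) (hcover : ∀ v : E, ‖v‖ ≤ 2 → ∃ c ∈ T, ‖v - c‖ ≤ 1) {x : E} {t : ℝ}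
    (ht : 0 ≤ t) (h : ∀ c ∈ T, inner ℝ x c ≤ t * ‖c‖) : ‖x‖ ≤ 2 * t := by
  rcases eq_or_ne x 0 with rfl | hx
  · simpa using ht
  have hx' : 0 < ‖x‖ := norm_pos_iff.mpr hx
  obtain ⟨c, hcT, hc⟩ := hcover ((2 * ‖x‖⁻¹) • x) (by
    rw [norm_smul, Real.norm_of_nonneg (by positivity), inv_mul_cancel_right₀ hx'.ne'])
  have hinner : inner ℝ x ((2 * ‖x‖⁻¹) • x) = 2 * ‖x‖ := by
    rw [real_inner_smul_right, real_inner_self_eq_norm_sq]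
    field_simp
  calc ‖x‖ = inner ℝ x ((2 * ‖x‖⁻¹) • x) - ‖x‖ * 1 := by rw [hinner]; ring
    _ ≤ inner ℝ x ((2 * ‖x‖⁻¹) • x) - inner ℝ x ((2 * ‖x‖⁻¹) • x - c) := by
        gcongr
        exact (real_inner_le_norm _ _).trans (by gcongr)
    _ = inner ℝ x c := by rw [inner_sub_right, sub_sub_cancel]
    _ ≤ t * ‖c‖ := h c hcT
    _ ≤ 2 * t := by nlinarith [hT c hcT]

end Net

variable {N Ω : Type*} [Fintype N] [MeasurableSpace Ω] {P : Measure Ω} {ρ t : ℝ}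
  {W : Ω → N → ℝ}

lemma subG.measure_mul_norm_lt_abs_inner_le (hW : subG P ρ W) (ht : 0 < t)
    (v : EuclideanSpace ℝ N) :
    P {ω | t * ‖v‖ < |inner ℝ (WithLp.toLp 2 (W ω)) v|} ≤
      ENNReal.ofReal (Real.exp (-ρ * t ^ 2 / 2)) := by
  rcases eq_or_ne v 0 with rfl | hv
  · simp
  have hv' : 0 < ‖v‖ := norm_pos_iff.mpr hv
  have hunit : enr (WithLp.ofLp (‖v‖⁻¹ • v)) = 1 := by
    rw [enr_eq_norm_toLp, WithLp.toLp_ofLp, norm_smul, norm_inv, norm_norm,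
      inv_mul_cancel₀ hv'.ne']
  refine (measure_mono fun ω hω => ?_).trans (hW _ hunit t ht)
  rwa [Set.mem_ofPred_eq, ipr_eq_inner_toLp, WithLp.toLp_ofLp, inner_smul_right, abs_mul, abs_inv,
    abs_norm, lt_inv_mul_iff₀ hv', mul_comm]

lemma subG.measure_exists_mem_lt_abs_inner_le (hW : subG P ρ W) (ht : 0 < t)
    (V : Submodule ℝ (EuclideanSpace ℝ N)) :
    P {ω | ∃ v ∈ V, 2 * t * ‖v‖ < |inner ℝ (WithLp.toLp 2 (W ω)) v|} ≤
      ENNReal.ofReal (5 ^ Module.finrank ℝ V * Real.exp (-ρ * t ^ 2 / 2)) := by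
  obtain ⟨T, hcard, hnorm, hcover⟩ := exists_finset_closedBall_two_cover (E := V)
  have hsub : {ω | ∃ v ∈ V, 2 * t * ‖v‖ < |inner ℝ (WithLp.toLp 2 (W ω)) v|} ⊆
      ⋃ c ∈ T, {ω | t * ‖(c : EuclideanSpace ℝ N)‖ <
        |inner ℝ (WithLp.toLp 2 (W ω)) (c : EuclideanSpace ℝ N)|} := by
    rintro ω ⟨v, hv, hlt⟩
    by_contra! hω
    simp only [Set.mem_iUnion, Set.mem_ofPred_eq, not_exists, not_lt] at hω
    set u := V.orthogonalProjectionOnto (WithLp.toLp 2 (W ω))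
    have hu (v : V) : inner ℝ (WithLp.toLp 2 (W ω)) (v : EuclideanSpace ℝ N) = inner ℝ u v :=
      (Submodule.inner_orthogonalProjectionOnto_eq_of_mem_right v _).symm
    have hnorm_u : ‖u‖ ≤ 2 * t := norm_le_of_forall_inner_le hnorm hcover ht.le fun c hc =>
      hu c ▸ (le_abs_self _).trans (hω c hc)
    refine hlt.not_ge ?_
    rw [hu ⟨v, hv⟩]
    exact (abs_real_inner_le_norm _ _).trans (by gcongr; rfl)
  calc P {ω | ∃ v ∈ V, 2 * t * ‖v‖ < |inner ℝ (WithLp.toLp 2 (W ω)) v|}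
      ≤ ∑ c ∈ T, P {ω | t * ‖(c : EuclideanSpace ℝ N)‖ <
          |inner ℝ (WithLp.toLp 2 (W ω)) (c : EuclideanSpace ℝ N)|} :=
        (measure_mono hsub).trans (measure_biUnion_finset_le _ _)
    _ ≤ ∑ _c ∈ T, ENNReal.ofReal (Real.exp (-ρ * t ^ 2 / 2)) :=
        Finset.sum_le_sum fun c _ => hW.measure_mul_norm_lt_abs_inner_le ht c
    _ = ENNReal.ofReal (T.card * Real.exp (-ρ * t ^ 2 / 2)) := by
        rw [Finset.sum_const, nsmul_eq_mul, ENNReal.ofReal_mul (by positivity),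
          ENNReal.ofReal_natCast]
    _ ≤ _ := by
        gcongr
        exact_mod_cast hcard

lemma subG.measure_exists_lt_abs_ipr_mulVec_sub_le {κ : Type*} [Fintype κ] (hW : subG P ρ W)
    (ht : 0 < t) (A : Matrix N κ ℝ) (θ : N → ℝ) :
    P {ω | ∃ Q, 2 * t * enr (A *ᵥ Q - θ) < |ipr (W ω) (A *ᵥ Q - θ)|} ≤
      ENNReal.ofReal (5 ^ (Fintype.card κ + 1) * Real.exp (-ρ * t ^ 2 / 2)) := by
  let V : Submodule ℝ (EuclideanSpace ℝ N) :=
    LinearMap.range (Matrix.toEuclideanLin A) ⊔ Submodule.span ℝ {WithLp.toLp 2 θ}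
  have hdim : Module.finrank ℝ V ≤ Fintype.card κ + 1 :=
    (Submodule.finrank_add_le_finrank_add_finrank _ _).trans <| add_le_add
      ((LinearMap.finrank_range_le _).trans_eq finrank_euclideanSpace)
      ((finrank_span_le_card _).trans_eq (by simp))
  have hmem (Q : κ → ℝ) : WithLp.toLp 2 (A *ᵥ Q - θ) ∈ V :=
    V.sub_mem (Submodule.mem_sup_left ⟨WithLp.toLp 2 Q, rfl⟩)
      (Submodule.mem_sup_right (Submodule.mem_span_singleton_self _))
  refine (measure_mono ?_).trans ((hW.measure_exists_mem_lt_abs_inner_le ht V).trans ?_)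
  · rintro ω ⟨Q, hQ⟩
    rw [enr_eq_norm_toLp, ipr_eq_inner_toLp] at hQ
    exact ⟨_, hmem Q, hQ⟩
  · gcongr
    norm_num

end Noise

section Evidence

variable {N κ : Type*} [Fintype N] [Fintype κ] {lam x c b : ℝ}

/-- Logarithm of the unnormalised posterior density of the signal `v` given the data `y`: Gaussian
pseudo-likelihood times elliptical Laplace prior of rate `lam`. -/
noncomputable def logPosterior (lam : ℝ) (y v : N → ℝ) : ℝ :=
  -(1 / 2) * enr (y - v) ^ 2 - lam * enr v

@[fun_prop]
lemma continuous_logPosterior (lam : ℝ) (y : N → ℝ) : Continuous (logPosterior lam y) := by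
  unfold logPosterior
  fun_prop

lemma logPosterior_sub_logPosterior (lam : ℝ) (θ w v : N → ℝ) :
    logPosterior lam (θ + w) v - logPosterior lam (θ + w) θ =
      ipr w (v - θ) - 1 / 2 * enr (v - θ) ^ 2 - lam * (enr v - enr θ) := by
  rw [logPosterior, logPosterior, enr_add_sub_sq, add_sub_cancel_left]
  ring

lemma logPosterior_le {θ w v : N → ℝ} (hlam : 0 ≤ lam)
    (hw : |ipr w (v - θ)| ≤ x * enr (v - θ)) :
    logPosterior lam (θ + w) v ≤
      logPosterior lam (θ + w) θ + 2 * (x ^ 2 + lam ^ 2) - 1 / 4 * enr (v - θ) ^ 2 := by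
  have hdiff := logPosterior_sub_logPosterior lam θ w v
  have hipr := (le_abs_self _).trans hw
  have henr := mul_le_mul_of_nonneg_left (neg_le_of_abs_le (abs_enr_sub_enr_le v θ)) hlam
  nlinarith [sq_nonneg (enr (v - θ) - 4 * x), sq_nonneg (enr (v - θ) - 4 * lam)]

lemma le_logPosterior {θ w v : N → ℝ} (hlam : 0 ≤ lam)
    (hw : |ipr w (v - θ)| ≤ x * enr (v - θ)) :
    logPosterior lam (θ + w) θ - 1 / 2 * (x ^ 2 + lam ^ 2) - 3 / 2 * enr (v - θ) ^ 2 ≤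
      logPosterior lam (θ + w) v := by
  have hdiff := logPosterior_sub_logPosterior lam θ w v
  have hipr := neg_le_of_abs_le hw
  have henr := mul_le_mul_of_nonneg_left (le_of_abs_le (abs_enr_sub_enr_le v θ)) hlam
  nlinarith [sq_nonneg (enr (v - θ) - x), sq_nonneg (enr (v - θ) - lam)]

variable [DecidableEq κ] {A : Matrix N κ ℝ}

lemma integrable_exp_logPosterior (hA : 0 < gramDet A) (hlam : 0 ≤ lam) (y : N → ℝ) :
    Integrable fun Q => Real.exp (logPosterior lam y (A *ᵥ Q)) := by
  refine (integrable_exp_neg_mul_enr_mulVec_sub_sq hA one_half_pos y).mono' (by fun_prop)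
    (.of_forall fun Q => ?_)
  rw [Real.norm_of_nonneg (Real.exp_nonneg _), logPosterior, enr_sub_comm]
  gcongr
  exact sub_le_self _ (mul_nonneg hlam (enr_nonneg _))

/-- Contribution of a single model with design matrix `A` to the normalising constant of the
posterior, restricted to the signals in `U`. -/
noncomputable def evidence (A : Matrix N κ ℝ) (lam : ℝ) (y : N → ℝ) (U : Set (N → ℝ)) : ℝ :=
  √(gramDet A) * (lam / √π) ^ Fintype.card κ *
    ∫ Q in {Q | A *ᵥ Q ∈ U}, Real.exp (logPosterior lam y (A *ᵥ Q))

lemma evidence_eq_zero_of_gramDet_nonpos (hA : gramDet A ≤ 0) (y : N → ℝ) (U : Set (N → ℝ)) :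
    evidence A lam y U = 0 := by
  rw [evidence, Real.sqrt_eq_zero_of_nonpos hA, zero_mul, zero_mul]

lemma evidence_nonneg (hlam : 0 ≤ lam) (y : N → ℝ) (U : Set (N → ℝ)) : 0 ≤ evidence A lam y U :=
  mul_nonneg (by positivity) (integral_nonneg fun _ => Real.exp_nonneg _)

lemma evidence_le_evidence_univ (hlam : 0 ≤ lam) (y : N → ℝ) (U : Set (N → ℝ)) :
    evidence A lam y U ≤ evidence A lam y Set.univ := by
  rcases le_or_gt (gramDet A) 0 with hA | hA
  · simp only [evidence_eq_zero_of_gramDet_nonpos hA, le_rfl]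
  · refine mul_le_mul_of_nonneg_left ?_ (by positivity)
    exact setIntegral_mono_set (integrable_exp_logPosterior hA hlam y).integrableOn
      (.of_forall fun _ => Real.exp_nonneg _) (.of_forall fun _ _ => Set.mem_univ _)

lemma laplace_mul_gaussian_const (lam c : ℝ) :
    lam / √π * √(π / c) = lam / √c := by
  rw [Real.sqrt_div pi_pos.le]
  have := (Real.sqrt_pos.mpr pi_pos).ne'
  field_simp

lemma evidence_le (hlam : 0 ≤ lam) (hc : 0 < c) {y θ : N → ℝ} {U : Set (N → ℝ)}
    (hU : MeasurableSet U)
    (h : ∀ Q, A *ᵥ Q ∈ U → logPosterior lam y (A *ᵥ Q) ≤ b - c * enr (A *ᵥ Q - θ) ^ 2) :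
    evidence A lam y U ≤ (lam / √c) ^ Fintype.card κ * Real.exp b := by
  rcases le_or_gt (gramDet A) 0 with hA | hA
  · rw [evidence_eq_zero_of_gramDet_nonpos hA]
    positivity
  have hgauss : Integrable fun Q => Real.exp b * Real.exp (-c * enr (A *ᵥ Q - θ) ^ 2) :=
    (integrable_exp_neg_mul_enr_mulVec_sub_sq hA hc θ).const_mul _
  have hUA : MeasurableSet {Q : κ → ℝ | A *ᵥ Q ∈ U} :=
    (by fun_prop : Continuous fun Q : κ → ℝ => A *ᵥ Q).measurable hU
  have hint : ∫ Q in {Q | A *ᵥ Q ∈ U}, Real.exp (logPosterior lam y (A *ᵥ Q)) ≤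
      ∫ Q, Real.exp b * Real.exp (-c * enr (A *ᵥ Q - θ) ^ 2) :=
    (setIntegral_mono_on (integrable_exp_logPosterior hA hlam y).integrableOn
      hgauss.integrableOn hUA fun Q hQ => by
        rw [← Real.exp_add, neg_mul, ← sub_eq_add_neg]
        exact Real.exp_le_exp.mpr (h Q hQ)).trans
      (setIntegral_le_integral hgauss (.of_forall fun Q => by positivity))
  calc evidence A lam y U
      ≤ √(gramDet A) * (lam / √π) ^ Fintype.card κ *
          ∫ Q, Real.exp b * Real.exp (-c * enr (A *ᵥ Q - θ) ^ 2) :=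
        mul_le_mul_of_nonneg_left hint (by positivity)
    _ = (lam / √π) ^ Fintype.card κ * Real.exp b *
          (√(gramDet A) * ∫ Q, Real.exp (-c * enr (A *ᵥ Q - θ) ^ 2)) := by
        rw [integral_const_mul]
        ring
    _ ≤ (lam / √π) ^ Fintype.card κ * Real.exp b * √(π / c) ^ Fintype.card κ := by
        gcongr
        exact sqrt_gramDet_mul_integral_exp_neg_mul_enr_mulVec_sub_sq_le hA hc θ
    _ = (lam / √c) ^ Fintype.card κ * Real.exp b := by
        rw [← laplace_mul_gaussian_const lam c, mul_pow]
        ring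

lemma le_evidence_univ (hA : 0 < gramDet A) (hlam : 0 ≤ lam) (hc : 0 < c) {y : N → ℝ}
    (Q₀ : κ → ℝ)
    (h : ∀ Q, b - c * enr (A *ᵥ Q - A *ᵥ Q₀) ^ 2 ≤ logPosterior lam y (A *ᵥ Q)) :
    (lam / √c) ^ Fintype.card κ * Real.exp b ≤ evidence A lam y Set.univ := by
  have hint : ∫ Q, Real.exp b * Real.exp (-c * enr (A *ᵥ Q - A *ᵥ Q₀) ^ 2) ≤
      ∫ Q, Real.exp (logPosterior lam y (A *ᵥ Q)) :=
    integral_mono ((integrable_exp_neg_mul_enr_mulVec_sub_sq hA hc _).const_mul _)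
      (integrable_exp_logPosterior hA hlam y) fun Q => by
        rw [← Real.exp_add, neg_mul, ← sub_eq_add_neg]
        exact Real.exp_le_exp.mpr (h Q)
  calc (lam / √c) ^ Fintype.card κ * Real.exp b
      = (lam / √π) ^ Fintype.card κ * Real.exp b * √(π / c) ^ Fintype.card κ := by
        rw [← laplace_mul_gaussian_const lam c, mul_pow]
        ring
    _ = √(gramDet A) * (lam / √π) ^ Fintype.card κ *
          ∫ Q, Real.exp b * Real.exp (-c * enr (A *ᵥ Q - A *ᵥ Q₀) ^ 2) := by
        rw [← sqrt_gramDet_mul_integral_exp_neg_mul_enr_mulVec_sub_sq hA c Q₀,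
          integral_const_mul]
        ring
    _ ≤ √(gramDet A) * (lam / √π) ^ Fintype.card κ *
          ∫ Q, Real.exp (logPosterior lam y (A *ᵥ Q)) :=
        mul_le_mul_of_nonneg_left hint (by positivity)
    _ = evidence A lam y Set.univ := by
        simp only [evidence, Set.mem_univ, Set.ofPred_true, setIntegral_univ]

lemma abs_log_div_sqrt_le (hlam : lam ≠ 0) (hc : 0 < c) :
    |Real.log (lam / √c)| ≤ |Real.log lam| + |Real.log c| / 2 := by
  rw [Real.log_div hlam (Real.sqrt_pos.mpr hc).ne', Real.log_sqrt hc.le]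
  simpa [abs_div] using abs_sub (Real.log lam) (Real.log c / 2)

lemma pow_le_exp_mul (hx : 0 < x) (hb : |Real.log x| ≤ b) (m : ℕ) :
    x ^ m ≤ Real.exp (b * m) := by
  rw [← Real.exp_log (pow_pos hx m), Real.log_pow, mul_comm]
  gcongr
  exact le_of_abs_le hb

lemma exp_neg_mul_le_pow (hx : 0 < x) (hb : |Real.log x| ≤ b) (m : ℕ) :
    Real.exp (-(b * m)) ≤ x ^ m := by
  rw [← Real.exp_log (pow_pos hx m), Real.log_pow, mul_comm, ← mul_neg]
  gcongr
  exact neg_le_of_abs_le hb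

lemma evidence_le_exp (hlam : 0 < lam) {θ w : N → ℝ}
    (hw : ∀ Q, |ipr w (A *ᵥ Q - θ)| ≤ x * enr (A *ᵥ Q - θ)) {U : Set (N → ℝ)}
    (hU : MeasurableSet U) {m₀ : ℝ} (hm₀ : ∀ v ∈ U, m₀ ≤ enr (v - θ) ^ 2) :
    evidence A lam (θ + w) U ≤ Real.exp ((|Real.log lam| + 4) * Fintype.card κ +
      (logPosterior lam (θ + w) θ + 2 * (x ^ 2 + lam ^ 2) - m₀ / 8)) := by
  have hlog : |Real.log (lam / √(1 / 8))| ≤ |Real.log lam| + 4 := by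
    have h8 : Real.log 8 ≤ 8 - 1 := Real.log_le_sub_one_of_pos (by norm_num)
    have h8' : 0 ≤ Real.log 8 := Real.log_nonneg (by norm_num)
    have := abs_log_div_sqrt_le hlam.ne' (c := 1 / 8) (by norm_num)
    rw [one_div, Real.log_inv, abs_neg, abs_of_nonneg h8', ← one_div] at this
    linarith
  -- half of the decay `1 / 4` of `logPosterior_le` yields `m₀ / 8`, the rest is integrated
  rw [Real.exp_add]
  refine (evidence_le hlam.le (c := 1 / 8) (θ := θ) (by norm_num) hU fun Q hQ => ?_).trans
    (mul_le_mul_of_nonneg_right (pow_le_exp_mul (by positivity) hlog _) (Real.exp_nonneg _))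
  linarith [logPosterior_le hlam.le (hw Q), hm₀ _ hQ]

lemma exp_le_evidence_univ (hA : 0 < gramDet A) (hlam : 0 < lam) {θ w : N → ℝ} {Q₀ : κ → ℝ}
    (hθ : A *ᵥ Q₀ = θ) (hw : ∀ Q, |ipr w (A *ᵥ Q - θ)| ≤ x * enr (A *ᵥ Q - θ)) :
    Real.exp (-((|Real.log lam| + 4) * Fintype.card κ) +
      (logPosterior lam (θ + w) θ - 1 / 2 * (x ^ 2 + lam ^ 2))) ≤
      evidence A lam (θ + w) Set.univ := by
  have hlog : |Real.log (lam / √(3 / 2))| ≤ |Real.log lam| + 4 := by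
    have h32 : Real.log (3 / 2) ≤ 3 / 2 - 1 := Real.log_le_sub_one_of_pos (by norm_num)
    have h32' : 0 ≤ Real.log (3 / 2) := Real.log_nonneg (by norm_num)
    have := abs_log_div_sqrt_le hlam.ne' (c := 3 / 2) (by norm_num)
    rw [abs_of_nonneg h32'] at this
    linarith
  rw [Real.exp_add]
  refine (mul_le_mul_of_nonneg_right (exp_neg_mul_le_pow (by positivity) hlog _)
    (Real.exp_nonneg _)).trans (le_evidence_univ hA hlam.le (by norm_num) Q₀ fun Q => ?_)
  rw [hθ]
  exact le_logPosterior hlam.le (hw Q)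

end Evidence

section PosteriorContraction

section TailIntegral

variable {Ω : Type*} [MeasurableSpace Ω] {P : Measure Ω} [IsProbabilityMeasure P] {f : Ω → ℝ}

lemma integral_le_two_mul_of_measure_le {B : Set Ω} {ε : ℝ} (hε : 0 ≤ ε) (hf : ∀ ω, f ω ≤ 1)
    (hfB : ∀ ω ∉ B, f ω ≤ ε) (hB : P B ≤ ENNReal.ofReal ε) : ∫ ω, f ω ∂P ≤ 2 * ε := by
  -- the Bochner integral of a non-integrable function is `0`
  by_cases hint : Integrable f P
  swap
  · rw [integral_undef hint]
    positivity
  have hmeas := measurableSet_toMeasurable P B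
  have hind : Integrable ((toMeasurable P B).indicator fun _ => (1 : ℝ)) P :=
    (integrable_const 1).indicator hmeas
  calc ∫ ω, f ω ∂P ≤ ∫ ω, ((toMeasurable P B).indicator (fun _ => 1) ω + ε) ∂P := by
        refine integral_mono hint (hind.add (integrable_const ε)) fun ω => ?_
        by_cases hω : ω ∈ toMeasurable P B
        · simp only [Set.indicator_of_mem hω]
          linarith [hf ω]
        · simp only [Set.indicator_of_notMem hω, zero_add]
          exact hfB ω fun hωB => hω (subset_toMeasurable P B hωB)
    _ = P.real (toMeasurable P B) + ε := by
        rw [integral_add hind (integrable_const ε), integral_indicator_const _ hmeas,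
          integral_const]
        simp
    _ ≤ ε + ε := by
        gcongr
        rw [Measure.real, measure_toMeasurable]
        exact ENNReal.toReal_le_of_le_ofReal hε hB
    _ = 2 * ε := (two_mul ε).symm

end TailIntegral

variable {N ι : Type*} [Fintype N] [Fintype ι] {κ : ι → Type*} [∀ i, Fintype (κ i)]

/-- Model weights `v` and complexities `R` for which the prior `v i * exp (-a * R i)` contracts: the
complexity dominates the dimension of the model, and `v` spreads its mass over each level of
complexity so that neither a single supported model is too light nor the total mass too large. -/
structure IsComplexityPrior (κ : ι → Type*) [∀ i, Fintype (κ i)] (v R : ι → ℝ) : Prop where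
  nonneg : ∀ i, 0 ≤ v i
  exp_neg_le : ∀ i, v i ≠ 0 → Real.exp (-2 * R i) ≤ v i
  card_le : ∀ i, v i ≠ 0 → (Fintype.card (κ i) : ℝ) ≤ R i
  sum_le_one : ∑ i, v i * Real.exp (-2 * R i) ≤ 1

/-- The noise `w` has, in every supported model, a component along signal differences of squared
length at most `K * (R i + r)`. -/
def NoiseControlled (v R : ι → ℝ) (A : (i : ι) → Matrix N (κ i) ℝ) (K r : ℝ) (θ w : N → ℝ) :
    Prop :=
  ∀ i, v i ≠ 0 → ∀ Q, |ipr w (A i *ᵥ Q - θ)| ≤ √(K * (R i + r)) * enr (A i *ᵥ Q - θ)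

/-- How large the prior exponent has to be in order to dominate the evidence ratios when the noise
is controlled at level `K`. -/
noncomputable def contractionConst (lam K : ℝ) : ℝ := |Real.log lam| + 8 + 3 * K + 3 * lam ^ 2

lemma contractionConst_pos {lam K : ℝ} (hK : 0 ≤ K) : 0 < contractionConst lam K := by
  unfold contractionConst
  positivity

variable {v R : ι → ℝ} {A : (i : ι) → Matrix N (κ i) ℝ} {lam a K r : ℝ}

lemma five_pow_mul_exp_neg_le {m : ℕ} {x : ℝ} (hm : m ≤ x) (hr : 1 ≤ r) :
    5 ^ (m + 1) * Real.exp (-6 * (x + r)) ≤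
      Real.exp (-2 * x) * Real.exp (-2 * x) * Real.exp (-2 * r) := by
  have h5 : (5 : ℝ) ≤ Real.exp 2 := by
    have := Real.exp_one_gt_d9
    rw [show (2 : ℝ) = 1 + 1 by norm_num, Real.exp_add]
    nlinarith
  calc 5 ^ (m + 1) * Real.exp (-6 * (x + r))
      ≤ Real.exp 2 ^ (m + 1) * Real.exp (-6 * (x + r)) := by gcongr
    _ = Real.exp (2 * (m + 1) - 6 * (x + r)) := by
        rw [← Real.exp_nat_mul, ← Real.exp_add]
        push_cast
        ring_nf
    _ ≤ Real.exp (-2 * x + -2 * x + -2 * r) := by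
        gcongr
        linarith
    _ = _ := by rw [Real.exp_add, Real.exp_add]

/- At `K = 48 / ρ` the sub-Gaussian tail of half the threshold is `exp (-6 * (R i + r))`, small
enough to beat the cardinality of the net, the lightest model weight and the union bound over
models. -/
lemma IsComplexityPrior.measure_not_noiseControlled_le (h : IsComplexityPrior κ v R) {Ω : Type*}
    [MeasurableSpace Ω] {P : Measure Ω} {ρ : ℝ} (hρ : 0 < ρ) {W : Ω → N → ℝ} (hW : subG P ρ W)
    (A : (i : ι) → Matrix N (κ i) ℝ) (θ : N → ℝ) (hr : 1 ≤ r) :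
    P {ω | ¬ NoiseControlled v R A (48 / ρ) r θ (W ω)} ≤ ENNReal.ofReal (Real.exp (-2 * r)) := by
  let B (i : ι) : Set Ω :=
    {ω | ∃ Q, √(48 / ρ * (R i + r)) * enr (A i *ᵥ Q - θ) < |ipr (W ω) (A i *ᵥ Q - θ)|}
  have hB (i : ι) (hi : v i ≠ 0) :
      P (B i) ≤ ENNReal.ofReal (v i * Real.exp (-2 * R i) * Real.exp (-2 * r)) := by
    have hR : 0 ≤ R i := (Nat.cast_nonneg _).trans (h.card_le i hi)
    have hX : 0 < 48 / ρ * (R i + r) := by positivity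
    have hexp : -ρ * (√(48 / ρ * (R i + r)) / 2) ^ 2 / 2 = -6 * (R i + r) := by
      rw [div_pow, Real.sq_sqrt hX.le]
      field_simp
      norm_num
    have hle := hW.measure_exists_lt_abs_ipr_mulVec_sub_le
      (half_pos (Real.sqrt_pos.mpr hX)) (A i) θ
    rw [mul_div_cancel₀ _ two_ne_zero, hexp] at hle
    refine hle.trans (ENNReal.ofReal_le_ofReal ?_)
    refine (five_pow_mul_exp_neg_le (h.card_le i hi) hr).trans ?_
    gcongr
    exact h.exp_neg_le i hi
  have hsub : {ω | ¬ NoiseControlled v R A (48 / ρ) r θ (W ω)} ⊆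
      ⋃ i ∈ Finset.univ.filter fun i => v i ≠ 0, B i := by
    intro ω hω
    simpa [NoiseControlled, B] using hω
  calc P {ω | ¬ NoiseControlled v R A (48 / ρ) r θ (W ω)}
      ≤ ∑ i with v i ≠ 0, P (B i) :=
        (measure_mono hsub).trans (measure_biUnion_finset_le _ _)
    _ ≤ ∑ i with v i ≠ 0, ENNReal.ofReal (v i * Real.exp (-2 * R i) * Real.exp (-2 * r)) :=
        Finset.sum_le_sum fun i hi => hB i (Finset.mem_filter.mp hi).2
    _ ≤ ∑ i, ENNReal.ofReal (v i * Real.exp (-2 * R i) * Real.exp (-2 * r)) :=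
        Finset.sum_le_univ_sum_of_nonneg fun _ => zero_le
    _ = ENNReal.ofReal ((∑ i, v i * Real.exp (-2 * R i)) * Real.exp (-2 * r)) := by
        rw [Finset.sum_mul, ENNReal.ofReal_sum_of_nonneg fun i _ => by
          have := h.nonneg i
          positivity]
    _ ≤ ENNReal.ofReal (Real.exp (-2 * r)) :=
        ENNReal.ofReal_le_ofReal (mul_le_of_le_one_left (Real.exp_nonneg _) h.sum_le_one)

variable [∀ i, DecidableEq (κ i)]

lemma gpostP_eq_sum_evidence_div (w : ι → ℝ) (A : (i : ι) → Matrix N (κ i) ℝ) (lam : ℝ)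
    (y : N → ℝ) (Sel : Set ι) (U : Set (N → ℝ)) :
    gpostP w A (fun i Q => A i *ᵥ Q) lam y Sel U =
      (∑ i, (if i ∈ Sel then w i else 0) * evidence (A i) lam y U) /
        ∑ i, w i * evidence (A i) lam y Set.univ := by
  simp only [gpostP, evidence, logPosterior, Set.mem_univ, Set.ofPred_true, setIntegral_univ,
    mul_assoc]
  rfl

lemma gpostP_le_one {w : ι → ℝ} (hw : ∀ i, 0 ≤ w i) (A : (i : ι) → Matrix N (κ i) ℝ)
    (hlam : 0 ≤ lam) (y : N → ℝ) (Sel : Set ι) (U : Set (N → ℝ)) :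
    gpostP w A (fun i Q => A i *ᵥ Q) lam y Sel U ≤ 1 := by
  rw [gpostP_eq_sum_evidence_div]
  refine div_le_one_of_le₀ (Finset.sum_le_sum fun i _ => ?_) (Finset.sum_nonneg fun i _ =>
    mul_nonneg (hw i) (evidence_nonneg hlam y _))
  refine mul_le_mul ?_ (evidence_le_evidence_univ hlam y U) (evidence_nonneg hlam y U) (hw i)
  split_ifs
  exacts [le_rfl, hw i]

lemma IsComplexityPrior.weight_mul_evidence_le (h : IsComplexityPrior κ v R) (hlam : 0 < lam)
    (hK : 0 ≤ K) (hr : 1 ≤ r) {θ w : N → ℝ} (hw : NoiseControlled v R A K r θ w)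
    {U : Set (N → ℝ)} (hU : MeasurableSet U) {m₀ : ℝ} (hm₀ : ∀ u ∈ U, m₀ ≤ enr (u - θ) ^ 2)
    {i : ι} (hi : v i ≠ 0)
    (ha : contractionConst lam K * (R i + r) ≤ a * (R i - r) + m₀ / 8) :
    v i * Real.exp (-a * R i) * evidence (A i) lam (θ + w) U ≤
      v i * Real.exp (-2 * R i) * Real.exp (logPosterior lam (θ + w) θ -
        (|Real.log lam| + 8 + a) * r - (K * r + lam ^ 2 / 2)) := by
  have hcard := h.card_le i hi
  have hR : 0 ≤ R i := (Nat.cast_nonneg _).trans hcard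
  have hev := evidence_le_exp hlam (hw i hi) hU hm₀
  rw [Real.sq_sqrt (by positivity)] at hev
  rw [mul_assoc, mul_assoc]
  refine mul_le_mul_of_nonneg_left ?_ (h.nonneg i)
  refine (mul_le_mul_of_nonneg_left hev (Real.exp_nonneg _)).trans ?_
  rw [← Real.exp_add, ← Real.exp_add]
  refine Real.exp_le_exp.mpr ?_
  have hlog : (|Real.log lam| + 4) * Fintype.card (κ i) ≤ (|Real.log lam| + 4) * R i := by gcongr
  have hlam_sq := mul_nonneg (sq_nonneg lam) (by linarith : 0 ≤ R i + r - 1)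
  unfold contractionConst at ha
  linarith [mul_nonneg hK hR, sq_nonneg lam]

lemma IsComplexityPrior.exp_le_weight_mul_evidence_univ (h : IsComplexityPrior κ v R)
    (hlam : 0 < lam) (hK : 0 ≤ K) {i₀ : ι} (hi₀ : v i₀ ≠ 0) (hA : 0 < gramDet (A i₀))
    {Q₀ : κ i₀ → ℝ} {θ w : N → ℝ} (hθ : A i₀ *ᵥ Q₀ = θ)
    (hw : NoiseControlled v R A K (R i₀) θ w) (a : ℝ) :
    Real.exp (logPosterior lam (θ + w) θ -
        (|Real.log lam| + 6 + a) * R i₀ - (K * R i₀ + lam ^ 2 / 2)) ≤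
      v i₀ * Real.exp (-a * R i₀) * evidence (A i₀) lam (θ + w) Set.univ := by
  have hcard := h.card_le i₀ hi₀
  have hR : 0 ≤ R i₀ := (Nat.cast_nonneg _).trans hcard
  have hev := exp_le_evidence_univ hA hlam hθ (hw i₀ hi₀)
  rw [Real.sq_sqrt (by positivity)] at hev
  have hv := h.nonneg i₀
  refine le_trans ?_ (mul_le_mul (mul_le_mul_of_nonneg_right (h.exp_neg_le i₀ hi₀)
    (Real.exp_nonneg _)) hev (Real.exp_nonneg _) (by positivity))
  rw [← Real.exp_add, ← Real.exp_add]
  refine Real.exp_le_exp.mpr ?_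
  have hlog : (|Real.log lam| + 4) * Fintype.card (κ i₀) ≤ (|Real.log lam| + 4) * R i₀ := by gcongr
  linarith

lemma IsComplexityPrior.gpostP_le_exp (h : IsComplexityPrior κ v R) (hlam : 0 < lam)
    (hK : 0 ≤ K) {i₀ : ι} (hi₀ : v i₀ ≠ 0) (hA : 0 < gramDet (A i₀)) (hR : 1 ≤ R i₀)
    {Q₀ : κ i₀ → ℝ} {θ w : N → ℝ} (hθ : A i₀ *ᵥ Q₀ = θ)
    (hw : NoiseControlled v R A K (R i₀) θ w) {Sel : Set ι} {U : Set (N → ℝ)}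
    (hU : MeasurableSet U) {m₀ : ℝ} (hm₀ : ∀ u ∈ U, m₀ ≤ enr (u - θ) ^ 2)
    (ha : ∀ i ∈ Sel, v i ≠ 0 →
      contractionConst lam K * (R i + R i₀) ≤ a * (R i - R i₀) + m₀ / 8) :
    gpostP (fun i => v i * Real.exp (-a * R i)) A (fun i Q => A i *ᵥ Q) lam (θ + w) Sel U ≤
      Real.exp (-2 * R i₀) := by
  have hterm (i : ι) : 0 ≤ v i * Real.exp (-a * R i) * evidence (A i) lam (θ + w) Set.univ :=
    mul_nonneg (mul_nonneg (h.nonneg i) (Real.exp_nonneg _)) (evidence_nonneg hlam.le _ _)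
  set b := logPosterior lam (θ + w) θ - (|Real.log lam| + 6 + a) * R i₀ -
    (K * R i₀ + lam ^ 2 / 2) with hb
  have hden : Real.exp b ≤
      ∑ i, v i * Real.exp (-a * R i) * evidence (A i) lam (θ + w) Set.univ :=
    (h.exp_le_weight_mul_evidence_univ hlam hK hi₀ hA hθ hw a).trans
      (Finset.single_le_sum (fun i _ => hterm i) (Finset.mem_univ i₀))
  have hexp : -2 * R i₀ + b = logPosterior lam (θ + w) θ - (|Real.log lam| + 8 + a) * R i₀ -
      (K * R i₀ + lam ^ 2 / 2) := by
    rw [hb]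
    ring
  rw [gpostP_eq_sum_evidence_div, div_le_iff₀ ((Real.exp_pos b).trans_le hden)]
  calc ∑ i, (if i ∈ Sel then v i * Real.exp (-a * R i) else 0) * evidence (A i) lam (θ + w) U
      ≤ ∑ i, v i * Real.exp (-2 * R i) * Real.exp (-2 * R i₀ + b) := by
        refine Finset.sum_le_sum fun i _ => ?_
        have hv := h.nonneg i
        split_ifs with hiSel
        · rcases eq_or_ne (v i) 0 with hi | hi
          · simp only [hi, zero_mul, le_rfl]
          · rw [hexp]
            exact h.weight_mul_evidence_le hlam hK hR hw hU hm₀ hi (ha i hiSel hi)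
        · rw [zero_mul]
          positivity
    _ = (∑ i, v i * Real.exp (-2 * R i)) * Real.exp (-2 * R i₀ + b) := by rw [Finset.sum_mul]
    _ ≤ Real.exp (-2 * R i₀ + b) := mul_le_of_le_one_left (Real.exp_nonneg _) h.sum_le_one
    _ = Real.exp (-2 * R i₀) * Real.exp b := Real.exp_add _ _
    _ ≤ _ := mul_le_mul_of_nonneg_left hden (Real.exp_nonneg _)

lemma IsComplexityPrior.integral_gpostP_le (h : IsComplexityPrior κ v R) (hlam : 0 < lam)
    {Ω : Type*} [MeasurableSpace Ω] {P : Measure Ω} [IsProbabilityMeasure P] {ρ : ℝ} (hρ : 0 < ρ)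
    {W : Ω → N → ℝ} (hW : subG P ρ W) {i₀ : ι} (hi₀ : v i₀ ≠ 0) (hA : 0 < gramDet (A i₀))
    (hR : 1 ≤ R i₀) {Q₀ : κ i₀ → ℝ} {θ : N → ℝ} (hθ : A i₀ *ᵥ Q₀ = θ) {Sel : Set ι}
    {U : Set (N → ℝ)} (hU : MeasurableSet U) {m₀ : ℝ} (hm₀ : ∀ u ∈ U, m₀ ≤ enr (u - θ) ^ 2)
    (ha : ∀ i ∈ Sel, v i ≠ 0 →
      contractionConst lam (48 / ρ) * (R i + R i₀) ≤ a * (R i - R i₀) + m₀ / 8) :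
    ∫ ω, gpostP (fun i => v i * Real.exp (-a * R i)) A (fun i Q => A i *ᵥ Q) lam (θ + W ω)
      Sel U ∂P ≤ Real.exp (-R i₀) := by
  have htail := integral_le_two_mul_of_measure_le (P := P) (Real.exp_nonneg (-2 * R i₀))
    (fun ω => gpostP_le_one (fun i => mul_nonneg (h.nonneg i) (Real.exp_nonneg (-a * R i))) A
      hlam.le (θ + W ω) Sel U)
    (fun ω hω => h.gpostP_le_exp hlam (by positivity) hi₀ hA hR hθ (not_not.mp hω) hU hm₀ ha)
    (h.measure_not_noiseControlled_le hρ hW A θ hR)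
  refine htail.trans ?_
  have htwo : 2 ≤ Real.exp (R i₀) := by linarith [Real.add_one_le_exp (R i₀)]
  calc 2 * Real.exp (-2 * R i₀) ≤ Real.exp (R i₀) * Real.exp (-2 * R i₀) := by gcongr
    _ = Real.exp (-R i₀) := by
        rw [← Real.exp_add]
        ring_nf

lemma IsComplexityPrior.integral_gpostP_complexity_le (h : IsComplexityPrior κ v R)
    (hlam : 0 < lam) {Ω : Type*} [MeasurableSpace Ω] {P : Measure Ω} [IsProbabilityMeasure P]
    {ρ : ℝ} (hρ : 0 < ρ) {W : Ω → N → ℝ} (hW : subG P ρ W) {i₀ : ι} (hi₀ : v i₀ ≠ 0)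
    (hA : 0 < gramDet (A i₀)) (hR : 1 ≤ R i₀) {Q₀ : κ i₀ → ℝ} {θ : N → ℝ} (hθ : A i₀ *ᵥ Q₀ = θ)
    {δ : ℝ} (hδ : 0 < δ) (ha : contractionConst lam (48 / ρ) * (2 + δ) ≤ a * δ) :
    ∫ ω, gpostP (fun i => v i * Real.exp (-a * R i)) A (fun i Q => A i *ᵥ Q) lam (θ + W ω)
      {i | (1 + δ) * R i₀ < R i} Set.univ ∂P ≤ Real.exp (-R i₀) := by
  have hL := contractionConst_pos (lam := lam) (K := 48 / ρ) (by positivity)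
  set L := contractionConst lam (48 / ρ)
  have hLa : L ≤ a := le_of_mul_le_mul_right (by linarith) hδ
  refine h.integral_gpostP_le hlam hρ hW hi₀ hA hR hθ .univ (m₀ := 0)
    (fun _ _ => sq_nonneg _) fun i (hi : (1 + δ) * R i₀ < R i) _ => ?_
  have hgap : δ * R i₀ ≤ R i - R i₀ := by linarith
  have hgain := mul_le_mul_of_nonneg_left hgap (sub_nonneg.mpr hLa)
  have hcost := mul_le_mul_of_nonneg_right ha (zero_le_one.trans hR)
  linarith

lemma IsComplexityPrior.integral_gpostP_loss_le (h : IsComplexityPrior κ v R)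
    (hlam : 0 < lam) {Ω : Type*} [MeasurableSpace Ω] {P : Measure Ω} [IsProbabilityMeasure P]
    {ρ : ℝ} (hρ : 0 < ρ) {W : Ω → N → ℝ} (hW : subG P ρ W) {i₀ : ι} (hi₀ : v i₀ ≠ 0)
    (hA : 0 < gramDet (A i₀)) (hR : 1 ≤ R i₀) {Q₀ : κ i₀ → ℝ} {θ : N → ℝ} (hθ : A i₀ *ᵥ Q₀ = θ)
    (ha : contractionConst lam (48 / ρ) ≤ a) :
    ∫ ω, gpostP (fun i => v i * Real.exp (-a * R i)) A (fun i Q => A i *ᵥ Q) lam (θ + W ω)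
      Set.univ {u | 8 * (a + contractionConst lam (48 / ρ)) * R i₀ < ∑ t, (u t - θ t) ^ 2} ∂P ≤
        Real.exp (-R i₀) := by
  refine h.integral_gpostP_le hlam hρ hW hi₀ hA hR hθ
    (measurableSet_lt measurable_const (by fun_prop))
    (m₀ := 8 * (a + contractionConst lam (48 / ρ)) * R i₀)
    (fun u hu => (hu.trans_eq (enr_sq (u - θ)).symm).le) fun i _ hi => ?_
  have hRi : 0 ≤ R i := (Nat.cast_nonneg _).trans (h.card_le i hi)
  linarith [mul_le_mul_of_nonneg_right ha hRi]

end PosteriorContraction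

section SparseVectors

variable {ι α : Type*} [Fintype ι] [Fintype α] [DecidableEq ι] [DecidableEq α]

lemma card_sparse_mul_pow_le (a : α) (s : ℕ) {x : ℝ} (hx₀ : 0 ≤ x) (hx₁ : x ≤ 1) :
    (Finset.card {v : ι → α | Finset.card {t | v t ≠ a} ≤ s} : ℝ) * x ^ s ≤
      (1 + (Fintype.card α - 1) * x) ^ Fintype.card ι := by
  calc (Finset.card {v : ι → α | Finset.card {t | v t ≠ a} ≤ s} : ℝ) * x ^ s
      = ∑ v : ι → α with Finset.card {t | v t ≠ a} ≤ s, x ^ s := by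
        rw [Finset.sum_const, nsmul_eq_mul]
    _ ≤ ∑ v : ι → α with Finset.card {t | v t ≠ a} ≤ s, x ^ Finset.card {t | v t ≠ a} :=
        Finset.sum_le_sum fun v hv => pow_le_pow_of_le_one hx₀ hx₁ (Finset.mem_filter.mp hv).2
    _ ≤ ∑ v : ι → α, x ^ Finset.card {t | v t ≠ a} :=
        Finset.sum_le_univ_sum_of_nonneg fun v => by positivity
    _ = ∑ v : ι → α, ∏ t, if v t ≠ a then x else 1 := by
        simp only [← Finset.prod_filter, Finset.prod_const]
    _ = (∑ j : α, if j ≠ a then x else 1) ^ Fintype.card ι := by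
        rw [← Finset.card_univ, ← Finset.prod_const, Finset.prod_univ_sum, Fintype.piFinset_univ]
    _ = (∑ j : α, (x + if j = a then 1 - x else 0)) ^ Fintype.card ι := by
        congr 1
        refine Finset.sum_congr rfl fun j _ => ?_
        by_cases hj : j = a <;> simp [hj]
    _ = (1 + (Fintype.card α - 1) * x) ^ Fintype.card ι := by
        rw [Finset.sum_add_distrib, Finset.sum_const, Fintype.sum_ite_eq', Finset.card_univ,
          nsmul_eq_mul]
        ring

lemma card_sparse_le_exp (a : α) {s : ℕ} (hs : 1 ≤ s) (hsι : s ≤ Fintype.card ι) :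
    (Finset.card {v : ι → α | Finset.card {t | v t ≠ a} ≤ s} : ℝ) ≤
      Real.exp (s * (Fintype.card α - 1 + Real.log (Fintype.card ι / s))) := by
  have hs₀ : (0 : ℝ) < s := by exact_mod_cast hs
  have hι₀ : (0 : ℝ) < Fintype.card ι := by exact_mod_cast hs.trans hsι
  have hα : (1 : ℝ) ≤ Fintype.card α := by exact_mod_cast Fintype.card_pos_iff.mpr ⟨a⟩
  set p := Fintype.card ι
  have hx₀ : (0 : ℝ) < s / p := div_pos hs₀ hι₀
  have hpow : ((s : ℝ) / p) ^ s = Real.exp (-(s * Real.log (p / s))) := by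
    rw [← mul_neg, ← Real.log_inv, inv_div, Real.exp_nat_mul, Real.exp_log hx₀]
  have hle : 1 + (Fintype.card α - 1) * ((s : ℝ) / p) ≤
      Real.exp ((Fintype.card α - 1) * (s / p)) := by
    rw [add_comm]
    exact Real.add_one_le_exp _
  have hbase : 0 ≤ 1 + (Fintype.card α - 1) * ((s : ℝ) / p) := by
    have := sub_nonneg.mpr hα
    positivity
  have hcard := (card_sparse_mul_pow_le (ι := ι) a s hx₀.le
    ((div_le_one hι₀).mpr (by exact_mod_cast hsι))).trans (pow_le_pow_left₀ hbase hle p)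
  rw [hpow, Real.exp_neg, ← div_eq_mul_inv, div_le_iff₀ (Real.exp_pos _), ← Real.exp_nat_mul,
    ← Real.exp_add] at hcard
  have hexp : p * ((Fintype.card α - 1) * ((s : ℝ) / p)) + s * Real.log (p / s) =
      s * (Fintype.card α - 1 + Real.log (p / s)) := by
    rw [mul_left_comm, mul_div_cancel₀ _ hι₀.ne']
    ring
  rwa [hexp] at hcard

end SparseVectors

section Dictionary

lemma tern_ne_zero_iff (x : Fin 3) : tern x ≠ 0 ↔ x ≠ 1 := by
  fin_cases x <;> norm_num [tern]

/-- The rate `np + ds log(ep/s)`, up to constants the dimension of the model `(p, s)` plus the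
logarithm of the number of its coefficient matrices. -/
noncomputable def dictRate (n d p s : ℕ) : ℝ :=
  (n : ℝ) * (p : ℝ) + (d : ℝ) * (s : ℝ) * Real.log (Real.exp 1 * (p : ℝ) / (s : ℝ))

section Rate

variable {n d p s : ℕ}

lemma log_exp_one_mul_div (hs : 1 ≤ s) (hsp : s ≤ p) :
    Real.log (Real.exp 1 * p / s) = 1 + Real.log (p / s) := by
  have hs₀ : (s : ℝ) ≠ 0 := by positivity
  have hp₀ : (p : ℝ) ≠ 0 := by exact_mod_cast Nat.ne_of_gt (hs.trans hsp)
  rw [mul_div_assoc, Real.log_mul (Real.exp_ne_zero 1) (div_ne_zero hp₀ hs₀), Real.log_exp]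

lemma log_div_nonneg (hs : 1 ≤ s) (hsp : s ≤ p) : 0 ≤ Real.log ((p : ℝ) / s) := by
  refine Real.log_nonneg ((one_le_div₀ ?_).mpr ?_)
  exacts [by exact_mod_cast hs, by exact_mod_cast hsp]

lemma one_le_log_exp_one_mul_div (hs : 1 ≤ s) (hsp : s ≤ p) :
    1 ≤ Real.log (Real.exp 1 * p / s) := by
  rw [log_exp_one_mul_div hs hsp]
  exact le_add_of_nonneg_right (log_div_nonneg hs hsp)

lemma mul_le_dictRate (hs : 1 ≤ s) (hsp : s ≤ p) : (n : ℝ) * p ≤ dictRate n d p s := by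
  have := one_le_log_exp_one_mul_div hs hsp
  exact le_add_of_nonneg_right (by positivity)

lemma add_le_dictRate (hn : 1 ≤ n) (hd : 1 ≤ d) (hs : 1 ≤ s) (hsp : s ≤ p) :
    (p : ℝ) + s ≤ dictRate n d p s := by
  have hn' : (1 : ℝ) ≤ n := by exact_mod_cast hn
  have hd' : (1 : ℝ) ≤ d := by exact_mod_cast hd
  refine add_le_add (le_mul_of_one_le_left (by positivity) hn') ?_
  exact (le_mul_of_one_le_left (by positivity) hd').trans
    (le_mul_of_one_le_right (by positivity) (one_le_log_exp_one_mul_div hs hsp))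

lemma card_dictOK_le_exp (n d : ℕ) (hs : 1 ≤ s) (hsp : s ≤ p) :
    (Finset.card {z : Fin p → Fin d → Fin 3 | dictOK s z} : ℝ) ≤
      Real.exp (2 * dictRate n d p s) := by
  let F : Finset (Fin p → Fin 3) := {v | Finset.card {t | v t ≠ 1} ≤ s}
  have hlog := log_div_nonneg hs hsp
  have hF : (F.card : ℝ) ≤ Real.exp (2 * (s * Real.log (Real.exp 1 * p / s))) := by
    refine (card_sparse_le_exp 1 hs (by rwa [Fintype.card_fin])).trans ?_
    rw [log_exp_one_mul_div hs hsp, Fintype.card_fin, Fintype.card_fin]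
    refine Real.exp_le_exp.mpr ?_
    have : 0 ≤ s * Real.log ((p : ℝ) / s) := by positivity
    push_cast
    linarith
  have hinj : Finset.card {z : Fin p → Fin d → Fin 3 | dictOK s z} ≤
      (Fintype.piFinset fun _ : Fin d => F).card := by
    refine Finset.card_le_card_of_injOn (fun z j t => z t j) (fun z hz => ?_) fun z _ z' _ h =>
      funext fun t => funext fun j => congrFun (congrFun h j) t
    have hcol := (Finset.mem_filter.mp hz).2.1
    simp only [tern_ne_zero_iff] at hcol
    simpa [F] using hcol
  calc (Finset.card {z : Fin p → Fin d → Fin 3 | dictOK s z} : ℝ)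
      ≤ (F.card : ℝ) ^ d := by
        rw [Fintype.card_piFinset_const] at hinj
        exact_mod_cast hinj
    _ ≤ Real.exp (2 * (s * Real.log (Real.exp 1 * p / s))) ^ d := by gcongr
    _ = Real.exp (2 * (d * s * Real.log (Real.exp 1 * p / s))) := by
        rw [← Real.exp_nat_mul]
        ring_nf
    _ ≤ Real.exp (2 * dictRate n d p s) := by
        gcongr
        exact le_add_of_nonneg_left (by positivity)

end Rate

section Design

variable {p d : ℕ} (n : ℕ) (z : Fin p → Fin d → Fin 3)

lemma dictX_mulVec (Q : Fin n × Fin p → ℝ) (a : Fin n × Fin d) :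
    (dictX n z *ᵥ Q) a = ∑ t, Q (a.1, t) * tern (z t a.2) := by
  simp [dictX, Matrix.mulVec, dotProduct, Fintype.sum_prod_type, mul_comm]

lemma dictX_transpose_mul_self :
    (dictX n z)ᵀ * dictX n z =
      Matrix.kronecker (1 : Matrix (Fin n) (Fin n) ℝ) (dictZmat z * (dictZmat z)ᵀ) := by
  ext a b
  rcases eq_or_ne a.1 b.1 with h | h
  · simp [Matrix.mul_apply, dictX, dictZmat, Fintype.sum_prod_type, Matrix.one_apply, h]
  · simp [Matrix.mul_apply, dictX, dictZmat, Fintype.sum_prod_type, h, h.symm]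

lemma gramDet_dictX : gramDet (dictX n z) = (dictZmat z * (dictZmat z)ᵀ).det ^ n := by
  rw [gramDet, dictX_transpose_mul_self, Matrix.kronecker, Matrix.det_kronecker, Matrix.det_one,
    one_pow, one_mul, Fintype.card_fin]

end Design

section Weight

/-- The conditional prior probability of `Z` given `(p, s)`: the uniform distribution on
`𝒵̄_{p,s}`, and `0` where `s > p`. -/
noncomputable def dictWeight {p d : ℕ} (s : ℕ) (z : Fin p → Fin d → Fin 3) : ℝ :=
  (if s ≤ p ∧ dictOK s z then 1 else 0) *
    (Finset.card {z' : Fin p → Fin d → Fin 3 | dictOK s z'} : ℝ)⁻¹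

variable {p d s : ℕ} {z : Fin p → Fin d → Fin 3}

lemma dictWeight_eq_inv_card (hsp : s ≤ p) (hz : dictOK s z) :
    dictWeight s z = (Finset.card {z' : Fin p → Fin d → Fin 3 | dictOK s z'} : ℝ)⁻¹ := by
  rw [dictWeight, if_pos ⟨hsp, hz⟩, one_mul]

lemma card_dictOK_pos (hz : dictOK s z) :
    0 < Finset.card {z' : Fin p → Fin d → Fin 3 | dictOK s z'} :=
  Finset.card_pos.mpr ⟨z, Finset.mem_filter.mpr ⟨Finset.mem_univ z, hz⟩⟩

lemma dictWeight_ne_zero_iff : dictWeight s z ≠ 0 ↔ s ≤ p ∧ dictOK s z := by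
  refine ⟨fun h => by_contra fun hz => h ?_, fun ⟨hsp, hz⟩ => ?_⟩
  · rw [dictWeight, if_neg hz, zero_mul]
  · rw [dictWeight_eq_inv_card hsp hz]
    exact inv_ne_zero (Nat.cast_ne_zero.mpr (card_dictOK_pos hz).ne')

lemma dictWeight_nonneg (s : ℕ) (z : Fin p → Fin d → Fin 3) : 0 ≤ dictWeight s z := by
  unfold dictWeight
  positivity

lemma exp_neg_le_dictWeight (n : ℕ) (hs : 1 ≤ s) (hsp : s ≤ p) (hz : dictOK s z) :
    Real.exp (-2 * dictRate n d p s) ≤ dictWeight s z := by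
  rw [dictWeight_eq_inv_card hsp hz, neg_mul, Real.exp_neg]
  exact inv_anti₀ (by exact_mod_cast card_dictOK_pos hz) (card_dictOK_le_exp n d hs hsp)

lemma sum_dictWeight_le_one (p d s : ℕ) : ∑ z : Fin p → Fin d → Fin 3, dictWeight s z ≤ 1 := by
  simp only [dictWeight]
  rw [← Finset.sum_mul, Finset.sum_boole]
  refine (mul_le_mul_of_nonneg_right ?_ (by positivity)).trans mul_inv_le_one
  exact_mod_cast Finset.card_le_card (Finset.monotone_filter_right _ fun _ _ => And.right)

lemma sum_dictWeight_mul_exp_le {n : ℕ} (hn : 1 ≤ n) (hd : 1 ≤ d) (hs : 1 ≤ s) :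
    ∑ z : Fin p → Fin d → Fin 3, dictWeight s z * Real.exp (-2 * dictRate n d p s) ≤
      Real.exp (-2 * p) * Real.exp (-2 * s) := by
  rw [← Real.exp_add, ← mul_add]
  calc ∑ z : Fin p → Fin d → Fin 3, dictWeight s z * Real.exp (-2 * dictRate n d p s)
      ≤ ∑ z : Fin p → Fin d → Fin 3, dictWeight s z * Real.exp (-2 * (p + s)) := by
        refine Finset.sum_le_sum fun z _ => ?_
        by_cases hz : dictWeight s z = 0
        · simp only [hz, zero_mul, le_rfl]
        · have := add_le_dictRate hn hd hs (dictWeight_ne_zero_iff.mp hz).1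
          exact mul_le_mul_of_nonneg_left (Real.exp_le_exp.mpr (by linarith))
            (dictWeight_nonneg s z)
    _ ≤ Real.exp (-2 * (p + s)) := by
        rw [← Finset.sum_mul]
        exact mul_le_of_le_one_left (Real.exp_nonneg _) (sum_dictWeight_le_one p d s)

end Weight

lemma sum_fin_exp_neg_two_mul_le_one (m : ℕ) :
    ∑ k : Fin m, Real.exp (-2 * ((k + 1 : ℕ) : ℝ)) ≤ 1 := by
  have hhalf : Real.exp (-2) ≤ 1 / 2 := by
    rw [Real.exp_neg, one_div]
    exact inv_anti₀ two_pos (by linarith [Real.add_one_le_exp (2 : ℝ)])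
  calc ∑ k : Fin m, Real.exp (-2 * ((k + 1 : ℕ) : ℝ))
      ≤ ∑ k : Fin m, 1 / 2 * (1 / 2 : ℝ) ^ (k : ℕ) := by
        refine Finset.sum_le_sum fun k _ => ?_
        rw [mul_comm, Real.exp_nat_mul, ← pow_succ']
        gcongr
    _ = 1 / 2 * ∑ k ∈ Finset.range m, (1 / 2 : ℝ) ^ k := by
        rw [← Finset.mul_sum, Fin.sum_univ_eq_sum_range fun k => (1 / 2 : ℝ) ^ k]
    _ ≤ 1 := by linarith [sum_geometric_two_le m]

/-- The models `(p, s, Z)` of the dictionary-learning prior, with `p = i.1.1 + 1` and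
`s = i.1.2 + 1`; the constraints `s ≤ p` and `Z ∈ 𝒵̄_{p,s}` are left to the weights. -/
abbrev DictModel (n d : ℕ) : Type :=
  Σ ps : Fin (n ⊓ d) × Fin n, (Fin ((ps.1 : ℕ) + 1) → Fin d → Fin 3)

lemma isComplexityPrior_dictWeight (n d : ℕ) :
    IsComplexityPrior (fun i : DictModel n d => Fin n × Fin ((i.1.1 : ℕ) + 1))
      (fun i => dictWeight ((i.1.2 : ℕ) + 1) i.2)
      (fun i => dictRate n d ((i.1.1 : ℕ) + 1) ((i.1.2 : ℕ) + 1)) where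
  nonneg i := dictWeight_nonneg _ i.2
  exp_neg_le i hi := exp_neg_le_dictWeight n (Nat.le_add_left 1 _)
    (dictWeight_ne_zero_iff.mp hi).1 (dictWeight_ne_zero_iff.mp hi).2
  card_le i hi := by
    rw [Fintype.card_prod, Fintype.card_fin, Fintype.card_fin, Nat.cast_mul]
    exact mul_le_dictRate (Nat.le_add_left 1 _) (dictWeight_ne_zero_iff.mp hi).1
  sum_le_one := by
    calc ∑ i : DictModel n d, dictWeight ((i.1.2 : ℕ) + 1) i.2 *
          Real.exp (-2 * dictRate n d ((i.1.1 : ℕ) + 1) ((i.1.2 : ℕ) + 1))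
        ≤ ∑ q : Fin (n ⊓ d) × Fin n,
            Real.exp (-2 * ((q.1 + 1 : ℕ) : ℝ)) * Real.exp (-2 * ((q.2 + 1 : ℕ) : ℝ)) := by
          rw [Fintype.sum_sigma]
          refine Finset.sum_le_sum fun q _ => ?_
          have hd : 1 ≤ d := q.1.pos.trans_le inf_le_right
          exact sum_dictWeight_mul_exp_le (p := q.1 + 1) (s := q.2 + 1) q.2.pos hd
            (Nat.le_add_left 1 _)
      _ = (∑ k : Fin (n ⊓ d), Real.exp (-2 * ((k + 1 : ℕ) : ℝ))) *
            ∑ l : Fin n, Real.exp (-2 * ((l + 1 : ℕ) : ℝ)) := by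
          rw [Fintype.sum_prod_type, Finset.sum_mul_sum]
      _ ≤ 1 := mul_le_one₀ (sum_fin_exp_neg_two_mul_le_one _)
          (Finset.sum_nonneg fun _ _ => Real.exp_nonneg _) (sum_fin_exp_neg_two_mul_le_one _)

lemma dictPost_eq_gpostP {n d : ℕ} (D lam : ℝ) (Y : Fin n × Fin d → ℝ) (K : Set (ℕ × ℕ))
    (U : Set (Fin n × Fin d → ℝ)) :
    dictPost n d D lam Y K U =
      gpostP (fun i : DictModel n d => dictWeight ((i.1.2 : ℕ) + 1) i.2 *
          Real.exp (-(3 * D) * dictRate n d ((i.1.1 : ℕ) + 1) ((i.1.2 : ℕ) + 1)))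
        (fun i => dictX n i.2) (fun i Q => dictX n i.2 *ᵥ Q) lam Y
        {i | ((i.1.1 : ℕ) + 1, (i.1.2 : ℕ) + 1) ∈ K} U := by
  unfold dictPost
  congr 1
  funext i
  rw [dictWeight, mul_right_comm, ← neg_mul]
  rfl

theorem dictionary_contraction_general {lam ρ δ : ℝ} (hlam : 0 < lam) (hρ : 0 < ρ) (hδ : 0 < δ) :
    ∃ D₀ : ℝ, 0 < D₀ ∧ ∀ D : ℝ, D₀ < D →
    ∃ M C' C'' : ℝ, 0 < M ∧ 0 < C' ∧ 0 < C'' ∧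
    ∀ (n d ps ss : ℕ), 1 ≤ ss → ss ≤ ps → ps ≤ n ⊓ d →
    ∀ Zs : Fin ps → Fin d → Fin 3, dictOK ss Zs →
    ∀ (Qs : Fin n → Fin ps → ℝ) (θs : Fin n × Fin d → ℝ),
      (∀ a, θs a = ∑ t, Qs a.1 t * tern (Zs t a.2)) →
    ∀ (Ω : Type*) (_ : MeasurableSpace Ω) (P : Measure Ω) (_ : IsProbabilityMeasure P)
      (W : Ω → Fin n × Fin d → ℝ), subG P ρ W →
    (∫ ω, dictPost n d D lam (fun a => θs a + W ω a)
        {q : ℕ × ℕ | (1 + δ) * dictRate n d ps ss < dictRate n d q.1 q.2} Set.univ ∂P ≤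
      Real.exp (-C' * dictRate n d ps ss)) ∧
    (∫ ω, dictPost n d D lam (fun a => θs a + W ω a) Set.univ
        {θ : Fin n × Fin d → ℝ | M * dictRate n d ps ss < ∑ a, (θ a - θs a) ^ 2} ∂P ≤
      Real.exp (-C'' * dictRate n d ps ss)) := by
  have hL := contractionConst_pos (lam := lam) (K := 48 / ρ) (by positivity)
  set L := contractionConst lam (48 / ρ)
  refine ⟨L * (2 + δ) / (3 * δ), by positivity, fun D hD => ?_⟩
  have haδ : L * (2 + δ) ≤ 3 * D * δ := by
    rw [div_lt_iff₀ (by positivity)] at hD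
    linarith
  have ha : L ≤ 3 * D := le_of_mul_le_mul_right (by linarith) hδ
  refine ⟨8 * (3 * D + L), 1, 1, by linarith, one_pos, one_pos, ?_⟩
  intro n d ps ss hss hsp hps Zs hZs Qs θs hθs Ω _ P _ W hW
  obtain ⟨k, rfl⟩ := Nat.exists_eq_add_of_le' (hss.trans hsp)
  obtain ⟨l, rfl⟩ := Nat.exists_eq_add_of_le' hss
  have hkn : k + 1 ≤ n := hps.trans inf_le_left
  let i₀ : DictModel n d := ⟨(⟨k, hps⟩, ⟨l, hsp.trans hkn⟩), Zs⟩
  have hi₀ : dictWeight (l + 1) Zs ≠ 0 := dictWeight_ne_zero_iff.mpr ⟨hsp, hZs⟩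
  have hA : 0 < gramDet (dictX n Zs) := by
    rw [gramDet_dictX]
    exact pow_pos hZs.2 n
  have hR : 1 ≤ dictRate n d (k + 1) (l + 1) := by
    refine le_trans ?_ (mul_le_dictRate hss hsp)
    exact_mod_cast one_le_mul ((Nat.le_add_left 1 k).trans hkn) (Nat.le_add_left 1 k)
  have hθ : dictX n Zs *ᵥ (fun b => Qs b.1 b.2) = θs :=
    funext fun a => (dictX_mulVec n Zs _ a).trans (hθs a).symm
  have hprior := isComplexityPrior_dictWeight n d
  simp only [neg_one_mul, dictPost_eq_gpostP]
  exact ⟨hprior.integral_gpostP_complexity_le hlam hρ hW (i₀ := i₀) hi₀ hA hR hθ hδ haδ,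
    hprior.integral_gpostP_loss_le hlam hρ hW (i₀ := i₀) hi₀ hA hR hθ ha⟩

end Dictionary

/-- Corollary 8 (dictionary learning): posterior contraction at the minimax rate
`np* + ds* log(ep*/s*)`, both for the selected model complexity and the Frobenius loss. -/
theorem dictionary_contraction :
    ∀ lam ρ : ℝ, 0 < lam → 0 < ρ →
    ∃ δ₀ : ℝ, 0 < δ₀ ∧ δ₀ ≤ 1 ∧ ∀ δ : ℝ, 0 < δ → δ < δ₀ →
    ∃ D₀ : ℝ, 0 < D₀ ∧ ∀ D : ℝ, D₀ < D →
    ∃ M C' C'' : ℝ, 0 < M ∧ 0 < C' ∧ 0 < C'' ∧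
    ∀ (n d ps ss : ℕ), 1 ≤ ss → ss ≤ ps → ps ≤ n ⊓ d →
    ∀ (Zs : Fin ps → Fin d → Fin 3), dictOK ss Zs →
    ∀ (Qs : Fin n → Fin ps → ℝ) (θs : Fin n × Fin d → ℝ),
      (∀ a, θs a = ∑ t, Qs a.1 t * tern (Zs t a.2)) →
    ∀ (Ω : Type) (_ : MeasurableSpace Ω) (P : Measure Ω) (_ : IsProbabilityMeasure P)
      (W : Ω → Fin n × Fin d → ℝ), subG P ρ W →
    (∫ ω, dictPost n d D lam (fun a => θs a + W ω a)
          {q : ℕ × ℕ |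
            (1 + δ) * ((n : ℝ) * (ps : ℝ)
                + (d : ℝ) * (ss : ℝ) * Real.log (Real.exp 1 * (ps : ℝ) / (ss : ℝ)))
              < (n : ℝ) * (q.1 : ℝ)
                + (d : ℝ) * (q.2 : ℝ) * Real.log (Real.exp 1 * (q.1 : ℝ) / (q.2 : ℝ))}
          Set.univ ∂P
        ≤ Real.exp (-C' * ((n : ℝ) * (ps : ℝ)
            + (d : ℝ) * (ss : ℝ) * Real.log (Real.exp 1 * (ps : ℝ) / (ss : ℝ))))) ∧
    (∫ ω, dictPost n d D lam (fun a => θs a + W ω a) Set.univ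
          {θ : Fin n × Fin d → ℝ |
            M * ((n : ℝ) * (ps : ℝ)
                + (d : ℝ) * (ss : ℝ) * Real.log (Real.exp 1 * (ps : ℝ) / (ss : ℝ)))
              < ∑ a : Fin n × Fin d, (θ a - θs a) ^ 2} ∂P
        ≤ Real.exp (-C'' * ((n : ℝ) * (ps : ℝ)
            + (d : ℝ) * (ss : ℝ) * Real.log (Real.exp 1 * (ps : ℝ) / (ss : ℝ))))) := by
  intro lam ρ hlam hρ
  exact ⟨1, one_pos, le_rfl, fun δ hδ _ => dictionary_contraction_general hlam hρ hδ⟩
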